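/- Let H be a cochordal finite simple graph on vertex set [n] with no isolated vertices, and let G be the graph on vertex set [n+2] with edge set E(H) ∪ {{n+1, n+2}}. If the normalized depth function g_{I(H)} is non-increasing on {1,…,ν(I(H))}, then g_{I(G)} is non-increasing on {1,…,ν(I(G))} = {1,…,ν(I(H))+1}. -/

import Mathlib

open MvPolynomial

/-- The squarefree monomial `∏ i ∈ F, xᵢ`. -/
noncomputable def sqMon (K : Type) [Field K] {σ : Type} (F : Finset σ) :
    MvPolynomial σ K := ∏ i ∈ F, X i

/-- `I` is a squarefree monomial ideal if it is generated by squarefree monomials. -/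
def IsSqfreeMonomialIdeal (K : Type) [Field K] {σ : Type}
    (I : Ideal (MvPolynomial σ K)) : Prop :=
  ∃ 𝒢 : Set (Finset σ), I = Ideal.span ((sqMon K) '' 𝒢)

/-- The `k`-th squarefree power `I^[k]`: the ideal generated by all squarefree
monomials belonging to `I^k`. -/
noncomputable def sqfreePower (K : Type) [Field K] {σ : Type}
    (I : Ideal (MvPolynomial σ K)) (k : ℕ) : Ideal (MvPolynomial σ K) :=
  Ideal.span {m | ∃ F : Finset σ, m = sqMon K F ∧ m ∈ I ^ k}

/-- The monomial grade `ν(I)`: the largest `k` with `I^[k] ≠ (0)`. -/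
noncomputable def monGrade (K : Type) [Field K] {σ : Type}
    (I : Ideal (MvPolynomial σ K)) : ℕ :=
  sSup {k | sqfreePower K I k ≠ ⊥}

/-- The initial degree of a squarefree monomial ideal: the least degree of a
(squarefree) monomial belonging to it. -/
noncomputable def indeg (K : Type) [Field K] {σ : Type}
    (I : Ideal (MvPolynomial σ K)) : ℕ :=
  sInf {d | ∃ F : Finset σ, F.card = d ∧ sqMon K F ∈ I}

/-- The depth of `S/I` over the polynomial ring `S`: the longest length of a
regular sequence on `S/I` consisting of elements of the irrelevant maximal ideal. -/
noncomputable def polyDepth (K : Type) [Field K] {σ : Type}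
    (I : Ideal (MvPolynomial σ K)) : ℕ :=
  sSup {k | ∃ rs : List (MvPolynomial σ K), rs.length = k ∧
    (∀ r ∈ rs, r ∈ Ideal.span (Set.range (X : σ → MvPolynomial σ K))) ∧
    RingTheory.Sequence.IsRegular (MvPolynomial σ K ⧸ I) rs}

/-- The normalized depth function `g_I(k) = depth(S/I^[k]) - (indeg(I^[k]) - 1)`. -/
noncomputable def nDepth (K : Type) [Field K] {σ : Type}
    (I : Ideal (MvPolynomial σ K)) (k : ℕ) : ℤ :=
  (polyDepth K (sqfreePower K I k) : ℤ) - ((indeg K (sqfreePower K I k) : ℤ) - 1)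

open MvPolynomial

/-- The edge ideal of a graph, generated by `xᵢxⱼ` for edges `{i,j}`. -/
noncomputable def edgeIdeal (K : Type) [Field K] {V : Type} (G : SimpleGraph V) :
    Ideal (MvPolynomial V K) :=
  Ideal.span {m | ∃ i j, G.Adj i j ∧ m = X i * X j}

/-- A finite set of edges of `G` forming a matching (pairwise vertex-disjoint edges). -/
def IsMatchingSet {V : Type} (G : SimpleGraph V) (M : Finset (Sym2 V)) : Prop :=
  (↑M ⊆ G.edgeSet) ∧ ∀ e ∈ M, ∀ f ∈ M, e ≠ f → ∀ v, v ∈ e → v ∉ f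

/-- The vertex set of a set of edges. -/
def matchVerts {V : Type} (M : Finset (Sym2 V)) : Set V := {v | ∃ e ∈ M, v ∈ e}

/-- The matching number of `G`. -/
noncomputable def matchNum {V : Type} (G : SimpleGraph V) : ℕ :=
  sSup {k | ∃ M : Finset (Sym2 V), IsMatchingSet G M ∧ M.card = k}

/-- A graph is chordal if it has no induced cycle of length `≥ 4`. -/
def IsChordal {V : Type} (G : SimpleGraph V) : Prop :=
  ∀ m : ℕ, 4 ≤ m → ∀ v : ZMod m → V, Function.Injective v →
    ¬ (∀ i j : ZMod m, G.Adj (v i) (v j) ↔ (j = i + 1 ∨ i = j + 1))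

/-- `v` is a cut vertex of the connected graph `G`:
removing it disconnects the graph. -/
def IsCutVertex {V : Type} (G : SimpleGraph V) (v : V) : Prop :=
  G.Connected ∧ ¬ (G.induce {u | u ≠ v}).Connected

/-- `G` has no isolated vertices. -/
def NoIsolated {V : Type} (G : SimpleGraph V) : Prop := ∀ v, ∃ u, G.Adj v u

/-- The normalized depth function of an ideal extended by the conventions
`g_I(0) = g_I(ν(I)+1) = +∞` (i.e. `+∞` outside `{1,…,ν(I)}`). -/
noncomputable def gExt (K : Type) [Field K] {σ : Type}
    (I : Ideal (MvPolynomial σ K)) (k : ℕ) : WithTop ℤ :=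
  if 1 ≤ k ∧ k ≤ monGrade K I then ((nDepth K I k : ℤ) : WithTop ℤ) else ⊤

/-- `G` is obtained from a graph `H` on `[n]` by adjoining the disjoint edge
`{n+1, n+2}` on two new vertices. -/
def IsAdjoinEdge {n : ℕ} (H : SimpleGraph (Fin n)) (G : SimpleGraph (Fin (n + 2))) : Prop :=
  ∀ a b : Fin (n + 2), G.Adj a b ↔
    ((∃ a' b' : Fin n, H.Adj a' b' ∧
        a = Fin.castLE (by omega) a' ∧ b = Fin.castLE (by omega) b') ∨
      (a = ⟨n, by omega⟩ ∧ b = ⟨n + 1, by omega⟩) ∨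
      (a = ⟨n + 1, by omega⟩ ∧ b = ⟨n, by omega⟩))

/-- `f` is a nonzerodivisor on `S ⧸ I`. -/
def RegularMod {S : Type*} [CommRing S] (f : S) (I : Ideal S) : Prop :=
  ∀ x, f * x ∈ I → x ∈ I

/-- There is a weakly `S ⧸ I`-regular sequence of length `d` with entries in `𝔞`. -/
def GradeGE {S : Type*} [CommRing S] (𝔞 : Ideal S) : ℕ → Ideal S → Prop
  | 0, _ => True
  | d + 1, I => ∃ f ∈ 𝔞, RegularMod f I ∧ GradeGE 𝔞 d (I ⊔ Ideal.span {f})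

/-- No nonzero element of `S ⧸ I` is annihilated by `𝔞`. -/
def SocleFree {S : Type*} [CommRing S] (𝔞 I : Ideal S) : Prop :=
  ∀ u, (∀ a ∈ 𝔞, a * u ∈ I) → u ∈ I

section Grade

variable {S : Type*} [CommRing S]

lemma mem_sup_span_singleton_iff {I : Ideal S} {f x : S} :
    x ∈ I ⊔ Ideal.span {f} ↔ ∃ t, x - f * t ∈ I := by
  rw [Submodule.mem_sup]
  constructor
  · rintro ⟨y, hy, z, hz, rfl⟩
    obtain ⟨t, rfl⟩ := Ideal.mem_span_singleton.1 hz
    exact ⟨t, by simpa using hy⟩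
  · rintro ⟨t, ht⟩
    exact ⟨_, ht, f * t, Ideal.mem_span_singleton.2 ⟨t, rfl⟩, by ring⟩

lemma RegularMod.swap {f g : S} {I : Ideal S} (hf : RegularMod f I)
    (hg : RegularMod g (I ⊔ Ideal.span {f})) : RegularMod f (I ⊔ Ideal.span {g}) := by
  intro m hm
  obtain ⟨t, ht⟩ := mem_sup_span_singleton_iff.1 hm
  have h1 : g * t ∈ I ⊔ Ideal.span {f} := by
    refine mem_sup_span_singleton_iff.2 ⟨m, ?_⟩
    rw [← neg_sub]
    exact I.neg_mem ht
  obtain ⟨s, hs⟩ := mem_sup_span_singleton_iff.1 (hg t h1)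
  refine mem_sup_span_singleton_iff.2 ⟨s, hf _ ?_⟩
  have h2 := I.add_mem ht (I.mul_mem_left g hs)
  convert h2 using 1
  ring

lemma GradeGE.socleFree {𝔞 I : Ideal S} {d : ℕ} (h : GradeGE 𝔞 (d + 1) I) :
    SocleFree 𝔞 I := by
  obtain ⟨f, hf, hr, -⟩ := h
  exact fun u hu => hr u (hu f hf)

lemma GradeGE.pred {𝔞 : Ideal S} {d : ℕ} : ∀ {I : Ideal S},
    GradeGE 𝔞 (d + 1) I → GradeGE 𝔞 d I := by
  induction d with
  | zero => exact fun _ => trivial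
  | succ d ih => exact fun ⟨f, hf, hr, hd⟩ => ⟨f, hf, hr, ih hd⟩

lemma GradeGE.mono {𝔞 I : Ideal S} {d e : ℕ} (hde : d ≤ e) (h : GradeGE 𝔞 e I) :
    GradeGE 𝔞 d I := by
  induction e, hde using Nat.le_induction with
  | base => exact h
  | succ e _ ih => exact ih h.pred

lemma gradeGE_top (𝔞 : Ideal S) (d : ℕ) : GradeGE 𝔞 d ⊤ := by
  induction d with
  | zero => trivial
  | succ d ih => exact ⟨0, 𝔞.zero_mem, fun _ _ => trivial, by simpa using ih⟩

lemma SocleFree.exchange {𝔞 I : Ideal S} {f g : S} (hga : g ∈ 𝔞)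
    (hf : RegularMod f I) (hg : RegularMod g I) (h : SocleFree 𝔞 (I ⊔ Ideal.span {g})) :
    SocleFree 𝔞 (I ⊔ Ideal.span {f}) := by
  intro u hu
  obtain ⟨w, hw⟩ := mem_sup_span_singleton_iff.1 (hu g hga)
  have hwg : w ∈ I ⊔ Ideal.span {g} := by
    refine h w fun a ha => ?_
    obtain ⟨t, ht⟩ := mem_sup_span_singleton_iff.1 (hu a ha)
    refine mem_sup_span_singleton_iff.2 ⟨t, hf _ ?_⟩
    have := I.sub_mem (I.mul_mem_left g ht) (I.mul_mem_left a hw)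
    convert this using 1
    ring
  obtain ⟨s, hs⟩ := mem_sup_span_singleton_iff.1 hwg
  refine mem_sup_span_singleton_iff.2 ⟨s, hg _ ?_⟩
  have := I.add_mem hw (I.mul_mem_left f hs)
  convert this using 1
  ring

lemma exists_isSMulRegular_of_forall_smul_eq_zero [IsNoetherianRing S] (𝔞 : Ideal S)
    (M : Type*) [AddCommGroup M] [Module S M] [Module.Finite S M]
    (h : ∀ m : M, (∀ a ∈ 𝔞, a • m = 0) → m = 0) : ∃ f ∈ 𝔞, IsSMulRegular M f := by
  by_contra! hcon
  have hsub : (𝔞 : Set S) ⊆ ⋃ p ∈ associatedPrimes S M, (p : Set S) := by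
    rw [biUnion_associatedPrimes_eq_compl_regular]
    exact fun a ha => hcon a ha
  obtain ⟨p, hp, hap⟩ := (Ideal.subset_union_prime_finite (associatedPrimes.finite S M)
    (f := fun p => p) ⊥ ⊥ fun p hp _ _ => hp.isPrime).1 hsub
  obtain ⟨hpr, m, rfl⟩ := isAssociatedPrime_iff.1 hp
  have hm : m = 0 := h m fun a ha => by
    simpa [Submodule.mem_colon_singleton] using hap ha
  exact hpr.ne_top (by simp [hm])

lemma exists_regularMod [IsNoetherianRing S] {𝔞 I J L : Ideal S} (hI : SocleFree 𝔞 I)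
    (hJ : SocleFree 𝔞 J) (hL : SocleFree 𝔞 L) :
    ∃ f ∈ 𝔞, RegularMod f I ∧ RegularMod f J ∧ RegularMod f L := by
  obtain ⟨f, hf, hr⟩ := exists_isSMulRegular_of_forall_smul_eq_zero 𝔞
      ((S ⧸ I) × (S ⧸ J) × (S ⧸ L)) (by
    rintro ⟨x, y, z⟩ h
    obtain ⟨x, rfl⟩ := Ideal.Quotient.mk_surjective x
    obtain ⟨y, rfl⟩ := Ideal.Quotient.mk_surjective y
    obtain ⟨z, rfl⟩ := Ideal.Quotient.mk_surjective z
    simp only [Prod.smul_mk, Prod.mk_eq_zero, ← Ideal.Quotient.mk_eq_mk,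
      ← Submodule.Quotient.mk_smul,
      Submodule.Quotient.mk_eq_zero] at h ⊢
    exact ⟨hI _ fun a ha => (h a ha).1, hJ _ fun a ha => (h a ha).2.1,
      hL _ fun a ha => (h a ha).2.2⟩)
  have key : ∀ x y z : S, f * x ∈ I → f * y ∈ J → f * z ∈ L → x ∈ I ∧ y ∈ J ∧ z ∈ L := by
    intro x y z hx hy hz
    have : f • ((Submodule.Quotient.mk x, Submodule.Quotient.mk y, Submodule.Quotient.mk z) :
      (S ⧸ I) × (S ⧸ J) × (S ⧸ L)) = 0 := by
      simp only [Prod.smul_mk, Prod.mk_eq_zero, ← Submodule.Quotient.mk_smul,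
        Submodule.Quotient.mk_eq_zero]
      exact ⟨hx, hy, hz⟩
    have := hr (this.trans (smul_zero f).symm)
    simpa only [Prod.mk_eq_zero, Submodule.Quotient.mk_eq_zero] using this
  exact ⟨f, hf, fun x hx => (key x 0 0 hx (by simp) (by simp)).1,
    fun x hx => (key 0 x 0 (by simp) hx (by simp)).2.1,
    fun x hx => (key 0 0 x (by simp) (by simp) hx).2.2⟩

/-- Factoring out a regular element drops the grade by at most one. -/
lemma GradeGE.quotient [IsNoetherianRing S] {𝔞 : Ideal S} {d : ℕ} : ∀ {I : Ideal S} {f : S},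
    f ∈ 𝔞 → RegularMod f I → GradeGE 𝔞 (d + 1) I → GradeGE 𝔞 d (I ⊔ Ideal.span {f}) := by
  induction d with
  | zero => exact fun _ _ _ => trivial
  | succ d ih =>
    rintro I f hfa hf hI
    have hI0 := hI.socleFree
    obtain ⟨g, hga, hg, hIg⟩ := hI
    obtain ⟨h, hha, h1, h2, h3⟩ := exists_regularMod hI0 hIg.socleFree
      (hIg.socleFree.exchange hga hf hg)
    have h4 : GradeGE 𝔞 (d + 1) (I ⊔ Ideal.span {h}) :=
      ⟨g, hga, hg.swap h2, by rw [sup_right_comm]; exact ih hha h2 hIg⟩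
    exact ⟨h, hha, h3, by rw [sup_right_comm]; exact ih hfa (hf.swap h3) h4⟩

lemma exists_not_gradeGE [IsNoetherianRing S] {𝔞 : Ideal S} (h𝔞 : 𝔞 ≠ ⊤)
    (I : Ideal S) (hI : I ≤ 𝔞) :
    ∃ d, ¬ GradeGE 𝔞 d I := by
  induction I using WellFoundedGT.induction with
  | ind I ih =>
    by_contra! hcon
    obtain ⟨f, hfa, hf, -⟩ := hcon 1
    have hfI : f ∉ I := fun h => h𝔞 ((Ideal.eq_top_iff_one _).2 (hI (hf 1 (by simpa using h))))
    obtain ⟨d, hd⟩ := ih (I ⊔ Ideal.span {f})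
      (left_lt_sup.2 fun h => hfI (h (Ideal.mem_span_singleton_self f)))
      (sup_le hI (by simpa [Ideal.span_le] using hfa))
    exact hd ((hcon (d + 1)).quotient hfa hf)

/-- The depth lemma for `0 → S ⧸ (I : h) → S ⧸ I → S ⧸ (I + (h)) → 0`. -/
lemma GradeGE.of_colon [IsNoetherianRing S] {𝔞 : Ideal S} {h : S} {d : ℕ} :
    ∀ {I Q : Ideal S}, (∀ x, x ∈ Q ↔ h * x ∈ I) → GradeGE 𝔞 d Q →
      GradeGE 𝔞 d (I ⊔ Ideal.span {h}) → GradeGE 𝔞 d I := by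
  induction d with
  | zero => exact fun _ _ _ => trivial
  | succ d ih =>
    intro I Q hQ h1 h2
    obtain ⟨f, hfa, hf1, hf2, -⟩ := exists_regularMod h1.socleFree h2.socleFree h2.socleFree
    refine ⟨f, hfa, fun x hx => ?_, ih (Q := Q ⊔ Ideal.span {f}) (fun x => ?_)
      (h1.quotient hfa hf1) (by rw [sup_right_comm]; exact h2.quotient hfa hf2)⟩
    · obtain ⟨t, ht⟩ := mem_sup_span_singleton_iff.1 (hf2 x (Ideal.mem_sup_left hx))
      have : t ∈ Q := hf1 t <| (hQ _).2 <| by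
        have := I.sub_mem hx (I.mul_mem_left f ht)
        convert this using 1
        ring
      simpa using I.add_mem ht ((hQ t).1 this)
    · simp only [mem_sup_span_singleton_iff, hQ]
      constructor
      · rintro ⟨t, ht⟩
        exact ⟨h * t, by convert ht using 1; ring⟩
      · rintro ⟨t, ht⟩
        obtain ⟨s, hs⟩ := mem_sup_span_singleton_iff.1 <| hf2 t <|
          mem_sup_span_singleton_iff.2 ⟨x, by simpa using I.neg_mem ht⟩
        refine ⟨s, ?_⟩
        have := I.add_mem ht (I.mul_mem_left f hs)
        convert this using 1
        ring

lemma GradeGE.map_equiv {S' : Type*} [CommRing S'] (e : S ≃+* S') {𝔞 : Ideal S} {d : ℕ} :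
    ∀ {I : Ideal S}, GradeGE 𝔞 d I → GradeGE (𝔞.map e) d (I.map e) := by
  induction d with
  | zero => exact fun _ => trivial
  | succ d ih =>
    rintro I ⟨f, hfa, hf, hd⟩
    refine ⟨e f, Ideal.mem_map_of_mem e hfa, fun x hx => ?_, ?_⟩
    · obtain ⟨x, rfl⟩ := e.surjective x
      rw [← map_mul] at hx
      have key : ∀ z, e z ∈ I.map e ↔ z ∈ I := fun z => by
        rw [Ideal.mem_map_of_equiv]
        simp
      exact (key _).2 (hf x ((key _).1 hx))
    · have := ih hd
      rwa [Ideal.map_sup, Ideal.map_span, Set.image_singleton] at this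

lemma GradeGE.exists_sub_mul_mem {𝔭 I : Ideal S} {y e : S}
    (h : GradeGE (𝔭 ⊔ Ideal.span {y}) 2 I) (he : ∀ a ∈ 𝔭, a * e ∈ I) :
    ∃ m, (∀ a ∈ 𝔭, a * m ∈ I) ∧ e - y * m ∈ I := by
  obtain ⟨r, hr, hrI, s, hs, hsI, -⟩ := h
  obtain ⟨g, hg⟩ := mem_sup_span_singleton_iff.1 hr
  obtain ⟨k, hk⟩ := mem_sup_span_singleton_iff.1 hs
  obtain ⟨m, hm⟩ : ∃ m, g * e - r * m ∈ I := by
    refine mem_sup_span_singleton_iff.1 (hsI _ (mem_sup_span_singleton_iff.2 ⟨k * e, ?_⟩))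
    have := I.sub_mem (I.mul_mem_left g (he _ hk)) (I.mul_mem_left k (he _ hg))
    convert this using 1
    ring
  have hmE : ∀ a ∈ 𝔭, a * m ∈ I := by
    intro a ha
    refine hrI _ ?_
    have := I.sub_mem (I.mul_mem_left g (he a ha)) (I.mul_mem_left a hm)
    convert this using 1
    ring
  refine ⟨m, hmE, hrI _ ?_⟩
  have := I.add_mem (I.sub_mem (he _ hg) (I.mul_mem_left y (hmE _ hg)))
    (I.add_mem (I.mul_mem_left y hm) (I.mul_mem_left y (hmE _ hg)))
  convert this using 1
  ring

end Grade

section PolynomialExtension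

open scoped Polynomial

variable {T : Type*} [CommRing T]

/-- The ideal `A + yB` of `T[y]`. -/
noncomputable def adjoinVar (A B : Ideal T) : Ideal T[X] :=
  A.map (Polynomial.C : T →+* T[X]) ⊔
    Ideal.span {(Polynomial.X : T[X])} *
    B.map (Polynomial.C : T →+* T[X])

lemma mem_span_X_mul_map_C {B : Ideal T} {p : T[X]} :
    p ∈ Ideal.span {(Polynomial.X : T[X])} * B.map (Polynomial.C : T →+* T[X]) ↔
      p.coeff 0 = 0 ∧ ∀ i, p.coeff (i + 1) ∈ B := by
  rw [Ideal.mem_span_singleton_mul]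
  constructor
  · rintro ⟨q, hq, rfl⟩
    rw [Ideal.mem_map_C_iff] at hq
    simpa using hq
  · rintro ⟨h0, h⟩
    refine ⟨p.divX, ?_, ?_⟩
    · rw [Ideal.mem_map_C_iff]
      simpa using h
    · have := p.X_mul_divX_add
      simpa [h0] using this

lemma mem_adjoinVar {A B : Ideal T} (hAB : A ≤ B) {p : T[X]} :
    p ∈ adjoinVar A B ↔ p.coeff 0 ∈ A ∧ ∀ i, p.coeff (i + 1) ∈ B := by
  unfold adjoinVar
  constructor
  · intro hp
    obtain ⟨a, ha, b, hb, rfl⟩ := Submodule.mem_sup.1 hp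
    rw [Ideal.mem_map_C_iff] at ha
    rw [mem_span_X_mul_map_C] at hb
    simp only [Polynomial.coeff_add, hb.1, add_zero]
    exact ⟨ha 0, fun i => B.add_mem (hAB (ha _)) (hb.2 i)⟩
  · rintro ⟨h0, h⟩
    rw [← p.X_mul_divX_add]
    refine Ideal.add_mem _ (Ideal.mem_sup_right ?_)
      (Ideal.mem_sup_left (Ideal.mem_map_of_mem _ h0))
    rw [mem_span_X_mul_map_C]
    simpa using h

lemma adjoinVar_sup_span (A B : Ideal T) (f : T) :
    adjoinVar A B ⊔ Ideal.span {Polynomial.C f} =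
      adjoinVar (A ⊔ Ideal.span {f}) (B ⊔ Ideal.span {f}) := by
  simp only [adjoinVar, Ideal.map_sup, Ideal.map_span, Set.image_singleton, Ideal.mul_sup]
  have : Ideal.span {(Polynomial.X : T[X])} * Ideal.span {Polynomial.C f} ≤
      Ideal.span {Polynomial.C f} := Ideal.mul_le_right
  apply le_antisymm
  · exact sup_le (sup_le (le_sup_of_le_left le_sup_left) (le_sup_of_le_right le_sup_left))
      (le_sup_of_le_left le_sup_right)
  · exact sup_le (sup_le (le_sup_of_le_left le_sup_left) le_sup_right)
      (sup_le (le_sup_of_le_left le_sup_right) (this.trans le_sup_right))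

lemma GradeGE.map_C {𝔞 : Ideal T} {d : ℕ} : ∀ {A : Ideal T}, GradeGE 𝔞 d A →
    GradeGE (𝔞.map (Polynomial.C : T →+* T[X]) ⊔ Ideal.span {Polynomial.X}) (d + 1)
      (A.map (Polynomial.C : T →+* T[X])) := by
  induction d with
  | zero =>
    refine fun _ => ⟨Polynomial.X, Ideal.mem_sup_right (Ideal.mem_span_singleton_self _),
      fun p hp => ?_, trivial⟩
    rw [Ideal.mem_map_C_iff] at hp ⊢
    intro i
    simpa using hp (i + 1)
  | succ d ih =>
    rintro A ⟨f, hfa, hf, hd⟩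
    refine ⟨Polynomial.C f, Ideal.mem_sup_left (Ideal.mem_map_of_mem _ hfa), fun p hp => ?_, ?_⟩
    · rw [Ideal.mem_map_C_iff] at hp ⊢
      intro i
      exact hf _ (by simpa using hp i)
    · have := ih hd
      rwa [Ideal.map_sup, Ideal.map_span, Set.image_singleton] at this

lemma GradeGE.map_C_sup_X {𝔞 : Ideal T} {d : ℕ} : ∀ {A : Ideal T}, GradeGE 𝔞 d A →
    GradeGE (𝔞.map (Polynomial.C : T →+* T[X]) ⊔ Ideal.span {Polynomial.X}) d
      (A.map (Polynomial.C : T →+* T[X]) ⊔ Ideal.span {Polynomial.X}) := by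
  induction d with
  | zero => exact fun _ => trivial
  | succ d ih =>
    rintro A ⟨f, hfa, hf, hd⟩
    have key : ∀ p : T[X],
        p ∈ A.map (Polynomial.C : T →+* T[X]) ⊔ Ideal.span {Polynomial.X} ↔ p.coeff 0 ∈ A := by
      intro p
      rw [← Ideal.mul_top (Ideal.span {(Polynomial.X : T[X])}),
        ← Ideal.map_top (Polynomial.C : T →+* T[X])]
      exact (mem_adjoinVar (A := A) le_top).trans (by simp)
    refine ⟨Polynomial.C f, Ideal.mem_sup_left (Ideal.mem_map_of_mem _ hfa), fun p hp => ?_, ?_⟩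
    · rw [key] at hp ⊢
      exact hf _ (by simpa using hp)
    · have := ih hd
      rwa [Ideal.map_sup, Ideal.map_span, Set.image_singleton, sup_right_comm] at this

lemma GradeGE.adjoinVar [IsNoetherianRing T] {𝔞 A B : Ideal T} (hAB : A ≤ B) {d : ℕ}
    (hA : GradeGE 𝔞 (d + 1) A) (hB : GradeGE 𝔞 d B) :
    GradeGE (𝔞.map (Polynomial.C : T →+* T[X]) ⊔ Ideal.span {Polynomial.X}) (d + 1)
      (adjoinVar A B) := by
  refine GradeGE.of_colon (h := Polynomial.X) (Q := B.map Polynomial.C) (fun p => ?_) hB.map_C ?_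
  · rw [mem_adjoinVar hAB, Ideal.mem_map_C_iff]
    simp
  · have h : Ideal.span {(Polynomial.X : T[X])} * B.map (Polynomial.C : T →+* T[X]) ≤
        Ideal.span {Polynomial.X} :=
      Ideal.mul_le_left
    rw [_root_.adjoinVar, sup_assoc, sup_eq_right.2 h]
    exact hA.map_C_sup_X

lemma GradeGE.of_adjoinVar [IsNoetherianRing T] {𝔞 : Ideal T} {d : ℕ} :
    ∀ {A B : Ideal T}, A ≤ B →
      GradeGE (𝔞.map (Polynomial.C : T →+* T[X]) ⊔ Ideal.span {Polynomial.X}) (d + 1)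
        (_root_.adjoinVar A B) →
      GradeGE 𝔞 d B := by
  induction d with
  | zero => exact fun _ _ => trivial
  | succ d ih =>
    intro A B hAB h
    have h2 := h.mono (show 2 ≤ d + 1 + 1 by omega)
    have hmap : ∀ p : T[X], (∀ a ∈ 𝔞, Polynomial.C a * p ∈ _root_.adjoinVar A B) →
        ∀ a ∈ 𝔞.map (Polynomial.C : T →+* T[X]), a * p ∈ _root_.adjoinVar A B := by
      intro p hp a ha
      have : 𝔞.map (Polynomial.C : T →+* T[X]) ≤ (_root_.adjoinVar A B).colon {p} := by
        rw [Ideal.map_le_iff_le_comap]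
        intro a ha
        simpa [Submodule.mem_colon_singleton] using hp a ha
      simpa [Submodule.mem_colon_singleton] using this ha
    have hA : SocleFree 𝔞 A := by
      intro u hu
      obtain ⟨m, -, hm⟩ := h2.exists_sub_mul_mem (e := Polynomial.C u) <| hmap _ fun a ha => by
        rw [← Polynomial.C_mul]
        exact Ideal.mem_sup_left (Ideal.mem_map_of_mem _ (hu a ha))
      simpa using ((mem_adjoinVar hAB).1 hm).1
    have hB : SocleFree 𝔞 B := by
      intro v hv
      obtain ⟨m, hm𝔞, hm⟩ := h2.exists_sub_mul_mem
        (e := Polynomial.X * Polynomial.C v) <| hmap _ fun a ha => by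
        rw [mul_left_comm, ← Polynomial.C_mul]
        exact Ideal.mem_sup_right (Ideal.mul_mem_mul (Ideal.mem_span_singleton_self _)
          (Ideal.mem_map_of_mem _ (hv a ha)))
      have h1 := ((mem_adjoinVar hAB).1 hm).2 0
      have h0 : m.coeff 0 ∈ A := hA _ fun a ha => by
        simpa using ((mem_adjoinVar hAB).1 (hm𝔞 _ (Ideal.mem_map_of_mem _ ha))).1
      have h1' : v - m.coeff 0 ∈ B := by simpa using h1
      simpa using B.add_mem h1' (hAB h0)
    obtain ⟨f, hfa, hfA, hfB, -⟩ := exists_regularMod hA hB hB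
    have hf : RegularMod (Polynomial.C f) (_root_.adjoinVar A B) := by
      intro p hp
      rw [mem_adjoinVar hAB] at hp ⊢
      simp only [Polynomial.coeff_C_mul] at hp
      exact ⟨hfA _ hp.1, fun i => hfB _ (hp.2 i)⟩
    refine ⟨f, hfa, hfB, ih (sup_le_sup_right hAB _) ?_⟩
    rw [← adjoinVar_sup_span]
    exact h.quotient (Ideal.mem_sup_left (Ideal.mem_map_of_mem _ hfa)) hf

end PolynomialExtension

section RegularSequences

variable {S : Type*} [CommRing S]

lemma isSMulRegular_quotient_iff_regularMod {I : Ideal S} {f : S} :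
    IsSMulRegular (S ⧸ I) f ↔ RegularMod f I := by
  rw [isSMulRegular_iff_right_eq_zero_of_smul, Submodule.Quotient.forall]
  simp only [← Submodule.Quotient.mk_smul, Submodule.Quotient.mk_eq_zero, smul_eq_mul]
  rfl

/-- Reducing `S ⧸ I` modulo `f` gives `S ⧸ (I + (f))`. -/
noncomputable def quotSMulTopQuotientEquiv (I : Ideal S) (f : S) :
    QuotSMulTop f (S ⧸ I) ≃ₗ[S] S ⧸ (I ⊔ Ideal.span {f}) :=
  (Submodule.quotEquivOfEq _ _ (by
    ext x
    obtain ⟨x, rfl⟩ := Submodule.Quotient.mk_surjective _ x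
    change _ ↔ (Submodule.Quotient.mk x : S ⧸ (I ⊔ Ideal.span {f})) = 0
    rw [Submodule.Quotient.mk_eq_zero, mem_sup_span_singleton_iff,
      Submodule.mem_smul_pointwise_iff_exists]
    constructor
    · rintro ⟨b, -, hb⟩
      obtain ⟨b, rfl⟩ := Submodule.Quotient.mk_surjective _ b
      exact ⟨b, (Submodule.Quotient.eq _).1 hb.symm⟩
    · rintro ⟨b, hb⟩
      exact ⟨Submodule.Quotient.mk b, trivial, ((Submodule.Quotient.eq _).2 hb).symm⟩)).trans
  ((Submodule.factor (le_sup_left : I ≤ I ⊔ Ideal.span {f})).quotKerEquivOfSurjective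
    (Submodule.factor_surjective _))

lemma gradeGE_iff_exists_isWeaklyRegular {𝔞 : Ideal S} {d : ℕ} : ∀ {I : Ideal S},
    GradeGE 𝔞 d I ↔ ∃ rs : List S, rs.length = d ∧ (∀ r ∈ rs, r ∈ 𝔞) ∧
      RingTheory.Sequence.IsWeaklyRegular (S ⧸ I) rs := by
  induction d with
  | zero =>
    refine fun {I} => ⟨fun _ => ⟨[], rfl, by simp, RingTheory.Sequence.IsWeaklyRegular.nil _ _⟩,
      fun _ => trivial⟩
  | succ d ih =>
    intro I
    constructor
    · rintro ⟨f, hfa, hf, hd⟩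
      obtain ⟨rs, hl, hrs, hw⟩ := ih.1 hd
      refine ⟨f :: rs, by simp [hl], by simpa using ⟨hfa, hrs⟩, ?_⟩
      rw [RingTheory.Sequence.isWeaklyRegular_cons_iff, isSMulRegular_quotient_iff_regularMod,
        (quotSMulTopQuotientEquiv I f).isWeaklyRegular_congr]
      exact ⟨hf, hw⟩
    · rintro ⟨_ | ⟨f, rs⟩, hl, hrs, hw⟩
      · simp at hl
      · rw [RingTheory.Sequence.isWeaklyRegular_cons_iff, isSMulRegular_quotient_iff_regularMod,
          (quotSMulTopQuotientEquiv I f).isWeaklyRegular_congr] at hw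
        simp only [List.mem_cons, forall_eq_or_imp] at hrs
        exact ⟨f, hrs.1, hw.1, ih.2 ⟨rs, by simpa using hl, hrs.2, hw.2⟩⟩

end RegularSequences

section LastVariable

variable (K : Type) [Field K] (n : ℕ)

/-- The irrelevant maximal ideal `(x₁, …, xₙ)`. -/
noncomputable abbrev irrelevantIdeal : Ideal (MvPolynomial (Fin n) K) :=
  Ideal.span (Set.range X)

/-- The inclusion `K[x₁, …, xₙ] → K[x₁, …, xₙ₊₁]`. -/
noncomputable def inclLast : MvPolynomial (Fin n) K →+* MvPolynomial (Fin (n + 1)) K :=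
  (rename Fin.castSucc : MvPolynomial (Fin n) K →ₐ[K] MvPolynomial (Fin (n + 1)) K).toRingHom

/-- The identification `K[x₁, …, xₙ₊₁] = K[x₁, …, xₙ][y]` with `xₙ₊₁ = y`. -/
noncomputable def lastEquiv :
    MvPolynomial (Fin (n + 1)) K ≃+* Polynomial (MvPolynomial (Fin n) K) :=
  ((renameEquiv K finSuccEquivLast).trans (optionEquivLeft K (Fin n))).toRingEquiv

lemma inclLast_X (i : Fin n) : inclLast K n (X i) = X i.castSucc := by
  simp [inclLast]

lemma lastEquiv_X_last : lastEquiv K n (X (Fin.last n)) = Polynomial.X := by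
  simp [lastEquiv]

lemma lastEquiv_X_castSucc (i : Fin n) :
    lastEquiv K n (X i.castSucc) = Polynomial.C (X i) := by
  simp [lastEquiv]

lemma lastEquiv_comp_inclLast :
    (lastEquiv K n : MvPolynomial (Fin (n + 1)) K →+* _).comp (inclLast K n) =
      Polynomial.C := by
  ext i
  · simp [inclLast, lastEquiv]
  · simp [inclLast_X, lastEquiv_X_castSucc]

variable {K n}

lemma map_lastEquiv_map_inclLast (A : Ideal (MvPolynomial (Fin n) K)) :
    (A.map (inclLast K n)).map (lastEquiv K n) = A.map Polynomial.C := by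
  rw [← lastEquiv_comp_inclLast, ← Ideal.map_map]
  rfl

/-- The ideal `A + xₙ₊₁ B` of `K[x₁, …, xₙ₊₁]`. -/
noncomputable def adjoinLast (A B : Ideal (MvPolynomial (Fin n) K)) :
    Ideal (MvPolynomial (Fin (n + 1)) K) :=
  A.map (inclLast K n) ⊔ Ideal.span {X (Fin.last n)} * B.map (inclLast K n)

lemma map_lastEquiv_adjoinLast (A B : Ideal (MvPolynomial (Fin n) K)) :
    (adjoinLast A B).map (lastEquiv K n) = adjoinVar A B := by
  rw [adjoinLast, adjoinVar, Ideal.map_sup, Ideal.map_mul, map_lastEquiv_map_inclLast,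
    map_lastEquiv_map_inclLast, Ideal.map_span, Set.image_singleton, lastEquiv_X_last]

lemma map_lastEquiv_irrelevantIdeal :
    (irrelevantIdeal K (n + 1)).map (lastEquiv K n) =
      (irrelevantIdeal K n).map Polynomial.C ⊔ Ideal.span {Polynomial.X} := by
  rw [irrelevantIdeal, irrelevantIdeal, Ideal.map_span, Ideal.map_span, ← Ideal.span_union]
  congr 1
  ext p
  constructor
  · rintro ⟨_, ⟨i, rfl⟩, rfl⟩
    refine Fin.lastCases ?_ (fun i => ?_) i
    · exact Or.inr (lastEquiv_X_last K n)
    · exact Or.inl ⟨_, ⟨i, rfl⟩, (lastEquiv_X_castSucc K n i).symm⟩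
  · rintro (⟨_, ⟨i, rfl⟩, rfl⟩ | rfl)
    · exact ⟨_, ⟨i.castSucc, rfl⟩, lastEquiv_X_castSucc K n i⟩
    · exact ⟨_, ⟨Fin.last n, rfl⟩, lastEquiv_X_last K n⟩

lemma gradeGE_map_lastEquiv {I : Ideal (MvPolynomial (Fin (n + 1)) K)} {d : ℕ} :
    GradeGE ((irrelevantIdeal K n).map Polynomial.C ⊔ Ideal.span {Polynomial.X}) d
      (I.map (lastEquiv K n)) ↔ GradeGE (irrelevantIdeal K (n + 1)) d I := by
  rw [← map_lastEquiv_irrelevantIdeal]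
  refine ⟨fun h => ?_, fun h => h.map_equiv _⟩
  have := h.map_equiv (lastEquiv K n).symm
  have hsymm (J : Ideal (MvPolynomial (Fin (n + 1)) K)) :
      (J.map (lastEquiv K n)).map (lastEquiv K n).symm = J := Ideal.map_of_equiv (lastEquiv K n)
  rwa [hsymm, hsymm] at this

lemma GradeGE.map_inclLast {A : Ideal (MvPolynomial (Fin n) K)} {d : ℕ}
    (h : GradeGE (irrelevantIdeal K n) d A) :
    GradeGE (irrelevantIdeal K (n + 1)) (d + 1) (A.map (inclLast K n)) := by
  rw [← gradeGE_map_lastEquiv, map_lastEquiv_map_inclLast]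
  exact h.map_C

lemma GradeGE.adjoinLast {A B : Ideal (MvPolynomial (Fin n) K)} (hAB : A ≤ B) {d : ℕ}
    (hA : GradeGE (irrelevantIdeal K n) (d + 1) A) (hB : GradeGE (irrelevantIdeal K n) d B) :
    GradeGE (irrelevantIdeal K (n + 1)) (d + 1) (_root_.adjoinLast A B) := by
  rw [← gradeGE_map_lastEquiv, map_lastEquiv_adjoinLast]
  exact hA.adjoinVar hAB hB

lemma GradeGE.of_adjoinLast {A B : Ideal (MvPolynomial (Fin n) K)} (hAB : A ≤ B) {d : ℕ}
    (h : GradeGE (irrelevantIdeal K (n + 1)) (d + 1) (_root_.adjoinLast A B)) :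
    GradeGE (irrelevantIdeal K n) d B := by
  rw [← gradeGE_map_lastEquiv, map_lastEquiv_adjoinLast] at h
  exact h.of_adjoinVar hAB

variable (K n) in
/-- The inclusion `K[x₁, …, xₙ] → K[x₁, …, xₙ₊₂]`. -/
noncomputable def inclTwo : MvPolynomial (Fin n) K →+* MvPolynomial (Fin (n + 2)) K :=
  (inclLast K (n + 1)).comp (inclLast K n)

/-- The ideal `A + xₙ₊₁xₙ₊₂ B` of `K[x₁, …, xₙ₊₂]`. -/
noncomputable def adjoinTwo (A B : Ideal (MvPolynomial (Fin n) K)) :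
    Ideal (MvPolynomial (Fin (n + 2)) K) :=
  A.map (inclTwo K n) ⊔
    Ideal.span {X (Fin.last n).castSucc * X (Fin.last (n + 1))} * B.map (inclTwo K n)

lemma adjoinLast_adjoinLast (A B : Ideal (MvPolynomial (Fin n) K)) :
    adjoinLast (A.map (inclLast K n)) (adjoinLast A B) = adjoinTwo A B := by
  have h : Ideal.span {X (Fin.last (n + 1))} * (A.map (inclLast K n)).map (inclLast K (n + 1)) ≤
      (A.map (inclLast K n)).map (inclLast K (n + 1)) := Ideal.mul_le_right
  rw [adjoinLast, adjoinLast, adjoinTwo, inclTwo, Ideal.map_sup, Ideal.mul_sup, ← sup_assoc,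
    sup_eq_left.2 h, Ideal.map_mul, ← mul_assoc, Ideal.map_span,
    Set.image_singleton, Ideal.span_singleton_mul_span_singleton, inclLast_X, Ideal.map_map,
    Ideal.map_map, mul_comm (X (Fin.last (n + 1)))]

lemma GradeGE.adjoinTwo {A B : Ideal (MvPolynomial (Fin n) K)} (hAB : A ≤ B) {d : ℕ}
    (hA : GradeGE (irrelevantIdeal K n) (d + 1) A) (hB : GradeGE (irrelevantIdeal K n) d B) :
    GradeGE (irrelevantIdeal K (n + 2)) (d + 2) (_root_.adjoinTwo A B) := by
  rw [← adjoinLast_adjoinLast]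
  exact hA.map_inclLast.adjoinLast le_sup_left (hA.adjoinLast hAB hB)

lemma GradeGE.of_adjoinTwo {A B : Ideal (MvPolynomial (Fin n) K)} (hAB : A ≤ B) {d : ℕ}
    (h : GradeGE (irrelevantIdeal K (n + 2)) (d + 2) (_root_.adjoinTwo A B)) :
    GradeGE (irrelevantIdeal K n) d B := by
  rw [← adjoinLast_adjoinLast] at h
  exact (h.of_adjoinLast le_sup_left).of_adjoinLast hAB

lemma irrelevantIdeal_ne_top : irrelevantIdeal K n ≠ ⊤ := by
  rw [irrelevantIdeal, Ideal.ne_top_iff_one, ← Set.image_univ, mem_ideal_span_X_image]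
  simp [MvPolynomial.support_one]

lemma le_polyDepth_iff {I : Ideal (MvPolynomial (Fin n) K)} (hI : I ≤ irrelevantIdeal K n)
    (d : ℕ) : d ≤ polyDepth K I ↔ GradeGE (irrelevantIdeal K n) d I := by
  have hset : {k | ∃ rs : List (MvPolynomial (Fin n) K), rs.length = k ∧
      (∀ r ∈ rs, r ∈ Ideal.span (Set.range (X : Fin n → MvPolynomial (Fin n) K))) ∧
      RingTheory.Sequence.IsRegular (MvPolynomial (Fin n) K ⧸ I) rs} =
      {k | GradeGE (irrelevantIdeal K n) k I} := by
    ext k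
    rw [Set.mem_ofPred_eq, Set.mem_ofPred_eq, gradeGE_iff_exists_isWeaklyRegular]
    refine exists_congr fun rs => and_congr_right fun _ => and_congr_right fun hrs =>
      ⟨fun h => h.1, fun h => ⟨h, fun htop => irrelevantIdeal_ne_top (K := K) (n := n) ?_⟩⟩
    have h1 : (Submodule.Quotient.mk 1 : MvPolynomial (Fin n) K ⧸ I) ∈
        Ideal.ofList rs • (⊤ : Submodule (MvPolynomial (Fin n) K) _) := htop ▸ trivial
    have h2 : Ideal.ofList rs • (⊤ : Submodule (MvPolynomial (Fin n) K) (_ ⧸ I)) ≤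
        Submodule.restrictScalars (MvPolynomial (Fin n) K)
          ((irrelevantIdeal K n).map (Ideal.Quotient.mk I)) := by
      rw [Submodule.smul_le]
      intro r hr x _
      obtain ⟨x, rfl⟩ := Ideal.Quotient.mk_surjective x
      have hr' : r ∈ irrelevantIdeal K n := (Ideal.span_le.2 fun r hr => hrs r hr) hr
      exact Ideal.mem_map_of_mem (Ideal.Quotient.mk I) (Ideal.mul_mem_right x _ hr')
    have h3 := h2 h1
    rw [Ideal.eq_top_iff_one]
    have h4 : Ideal.Quotient.mk I 1 ∈ (irrelevantIdeal K n).map (Ideal.Quotient.mk I) := h3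
    rw [Ideal.mem_quotient_iff_mem hI] at h4
    exact h4
  obtain ⟨N, hN⟩ := exists_not_gradeGE irrelevantIdeal_ne_top I hI
  have hbdd : BddAbove {k | GradeGE (irrelevantIdeal K n) k I} :=
    ⟨N, fun k hk => le_of_not_ge fun h => hN (GradeGE.mono h hk)⟩
  have h0 : GradeGE (irrelevantIdeal K n) 0 I := trivial
  rw [polyDepth, hset]
  exact ⟨fun h => GradeGE.mono h (Nat.sSup_mem ⟨0, h0⟩ hbdd), fun h => le_csSup hbdd h⟩

end LastVariable

section Matchings

variable {V : Type} {G : SimpleGraph V} (K : Type) [Field K]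

variable (G) in
/-- The exponents of the products of `k` edges of `G`. -/
def edgeProductExponents : ℕ → Set (V →₀ ℕ)
  | 0 => {0}
  | k + 1 => {s | ∃ i j, G.Adj i j ∧ ∃ t ∈ edgeProductExponents k,
      s = Finsupp.single i 1 + Finsupp.single j 1 + t}

lemma sqMon_eq_monomial (F : Finset V) :
    sqMon K F = monomial (∑ i ∈ F, Finsupp.single i 1) (1 : K) := by
  rw [monomial_sum_one]
  rfl

lemma edgeIdeal_pow_eq_span (k : ℕ) : edgeIdeal K G ^ k =
    Ideal.span ((fun s => monomial s (1 : K)) '' edgeProductExponents G k) := by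
  induction k with
  | zero => simp [edgeProductExponents]
  | succ k ih =>
    rw [pow_succ', ih, edgeIdeal, Ideal.span_mul_span']
    congr 1
    ext p
    simp only [Set.mem_mul, Set.mem_ofPred_eq, Set.mem_image, edgeProductExponents]
    constructor
    · rintro ⟨_, ⟨i, j, hij, rfl⟩, _, ⟨t, ht, rfl⟩, rfl⟩
      exact ⟨_, ⟨i, j, hij, t, ht, rfl⟩, by simp [X, monomial_mul]⟩
    · rintro ⟨_, ⟨i, j, hij, t, ht, rfl⟩, rfl⟩
      exact ⟨_, ⟨i, j, hij, rfl⟩, _, ⟨t, ht, rfl⟩, by simp [X, monomial_mul]⟩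

lemma sqMon_dvd_sqMon {F F' : Finset V} (h : F ⊆ F') : sqMon K F ∣ sqMon K F' :=
  Finset.prod_dvd_prod_of_subset _ _ _ h

variable [DecidableEq V]

/-- The vertex set `F` contains a matching of `G` with `k` edges. -/
def ContainsMatching (G : SimpleGraph V) : ℕ → Finset V → Prop
  | 0, _ => True
  | k + 1, F => ∃ i j, G.Adj i j ∧ i ∈ F ∧ j ∈ F ∧ ContainsMatching G k (F \ {i, j})

lemma ContainsMatching.mono {k : ℕ} : ∀ {F F' : Finset V}, F ⊆ F' →
    ContainsMatching G k F → ContainsMatching G k F' := by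
  induction k with
  | zero => exact fun _ _ => trivial
  | succ k ih =>
    rintro F F' hF ⟨i, j, hij, hi, hj, h⟩
    exact ⟨i, j, hij, hF hi, hF hj, ih (Finset.sdiff_subset_sdiff hF le_rfl) h⟩

lemma ContainsMatching.pred {k : ℕ} {F : Finset V} (h : ContainsMatching G (k + 1) F) :
    ContainsMatching G k F := by
  obtain ⟨i, j, -, -, -, h⟩ := h
  exact h.mono Finset.sdiff_subset

lemma ContainsMatching.of_le {k l : ℕ} {F : Finset V} (hkl : k ≤ l)
    (h : ContainsMatching G l F) : ContainsMatching G k F := by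
  induction l, hkl using Nat.le_induction with
  | base => exact h
  | succ l _ ih => exact ih h.pred

lemma ContainsMatching.exists_card_eq {k : ℕ} : ∀ {F : Finset V}, ContainsMatching G k F →
    ∃ F' ⊆ F, F'.card = 2 * k ∧ ContainsMatching G k F' := by
  induction k with
  | zero => exact fun {F} _ => ⟨∅, by simp, by simp, trivial⟩
  | succ k ih =>
    rintro F ⟨i, j, hij, hi, hj, h⟩
    obtain ⟨F', hF', hc, hm⟩ := ih h
    have hd : Disjoint F' {i, j} := Finset.disjoint_of_subset_left hF' Finset.sdiff_disjoint
    refine ⟨F' ∪ {i, j}, ?_, ?_, i, j, hij, by simp, by simp, hm.mono ?_⟩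
    · refine Finset.union_subset (hF'.trans Finset.sdiff_subset) ?_
      simp [Finset.insert_subset_iff, hi, hj]
    · rw [Finset.card_union_of_disjoint hd, hc, Finset.card_pair hij.ne]
      ring
    · rw [Finset.union_sdiff_cancel_right hd]

lemma ContainsMatching.two_mul_le_card {k : ℕ} : ∀ {F : Finset V}, ContainsMatching G k F →
    2 * k ≤ F.card := by
  intro F h
  obtain ⟨F', hF, hc, -⟩ := h.exists_card_eq
  exact hc ▸ Finset.card_le_card hF

lemma containsMatching_of_le {k : ℕ} : ∀ {F : Finset V} {s : V →₀ ℕ},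
    s ∈ edgeProductExponents G k → (∀ v, s v ≤ if v ∈ F then 1 else 0) →
    ContainsMatching G k F := by
  induction k with
  | zero => exact fun _ _ => trivial
  | succ k ih =>
    rintro F _ ⟨i, j, hij, t, ht, rfl⟩ hs
    have hne := hij.ne
    refine ⟨i, j, hij, ?_, ?_, ih ht fun v => ?_⟩
    · by_contra h
      have := hs i
      simp [h] at this
    · by_contra h
      have := hs j
      simp [h] at this
    · have := hs v
      simp only [Finsupp.add_apply, Finsupp.single_apply] at this
      simp only [Finset.mem_sdiff, Finset.mem_insert, Finset.mem_singleton]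
      grind

lemma sqMon_mul_sqMon {F F' : Finset V} (h : Disjoint F F') :
    sqMon K F * sqMon K F' = sqMon K (F ∪ F') := (Finset.prod_union h).symm

lemma sqMon_pair {i j : V} (h : i ≠ j) : sqMon K {i, j} = X i * X j := Finset.prod_pair h

lemma ContainsMatching.sqMon_mem {k : ℕ} : ∀ {F : Finset V}, ContainsMatching G k F →
    sqMon K F ∈ edgeIdeal K G ^ k := by
  induction k with
  | zero => simp
  | succ k ih =>
    rintro F ⟨i, j, hij, hi, hj, h⟩
    have hF : {i, j} ∪ F \ {i, j} = F :=
      Finset.union_sdiff_of_subset (by simp [Finset.insert_subset_iff, hi, hj])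
    rw [← hF, ← sqMon_mul_sqMon K Finset.disjoint_sdiff, sqMon_pair K hij.ne, pow_succ']
    exact Ideal.mul_mem_mul (Ideal.subset_span ⟨i, j, hij, rfl⟩) (ih h)

lemma sqMon_mem_edgeIdeal_pow_iff {k : ℕ} {F : Finset V} :
    sqMon K F ∈ edgeIdeal K G ^ k ↔ ContainsMatching G k F := by
  refine ⟨fun h => ?_, fun h => h.sqMon_mem K⟩
  rw [edgeIdeal_pow_eq_span, sqMon_eq_monomial, mem_ideal_span_monomial_image] at h
  obtain ⟨s, hs, hle⟩ := h (∑ i ∈ F, Finsupp.single i 1) (by simp [mem_support_iff])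
  refine containsMatching_of_le hs fun v => (hle v).trans (le_of_eq ?_)
  simp [Finsupp.finsetSum_apply, Finsupp.single_apply]

lemma sqfreePower_edgeIdeal (k : ℕ) : sqfreePower K (edgeIdeal K G) k =
    Ideal.span (sqMon K '' {F | ContainsMatching G k F}) := by
  rw [sqfreePower]
  congr 1
  ext m
  constructor
  · rintro ⟨F, rfl, hF⟩
    exact ⟨F, (sqMon_mem_edgeIdeal_pow_iff K).1 hF, rfl⟩
  · rintro ⟨F, hF, rfl⟩
    exact ⟨F, rfl, ContainsMatching.sqMon_mem K hF⟩

lemma sqMon_mem_sqfreePower_iff {k : ℕ} {F : Finset V} :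
    sqMon K F ∈ sqfreePower K (edgeIdeal K G) k ↔ ContainsMatching G k F := by
  constructor
  · intro h
    rw [← sqMon_mem_edgeIdeal_pow_iff K]
    exact (Ideal.span_le.2 (by rintro _ ⟨F, rfl, hF⟩; exact hF) :
      sqfreePower K (edgeIdeal K G) k ≤ _) h
  · intro h
    rw [sqfreePower_edgeIdeal]
    exact Ideal.subset_span ⟨F, h, rfl⟩

lemma sqfreePower_edgeIdeal_antitone : Antitone (sqfreePower K (edgeIdeal K G)) := by
  intro k l hkl
  rw [sqfreePower_edgeIdeal, sqfreePower_edgeIdeal]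
  exact Ideal.span_mono (Set.image_mono fun F hF => hF.of_le hkl)

lemma indeg_sqfreePower_edgeIdeal {k : ℕ} {F : Finset V} (hF : ContainsMatching G k F) :
    indeg K (sqfreePower K (edgeIdeal K G) k) = 2 * k := by
  simp only [indeg, sqMon_mem_sqfreePower_iff]
  obtain ⟨F', -, hc, hm⟩ := hF.exists_card_eq
  refine le_antisymm (Nat.sInf_le ⟨F', hc, hm⟩) (le_csInf ⟨_, F', hc, hm⟩ ?_)
  rintro _ ⟨E, rfl, hE⟩
  exact hE.two_mul_le_card

lemma le_monGrade_edgeIdeal_iff [Fintype V] {k : ℕ} :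
    k ≤ monGrade K (edgeIdeal K G) ↔ ContainsMatching G k Finset.univ := by
  have hset : {k | sqfreePower K (edgeIdeal K G) k ≠ ⊥} =
      {k | ContainsMatching G k Finset.univ} := by
    ext k
    rw [Set.mem_ofPred_eq, Set.mem_ofPred_eq, sqfreePower_edgeIdeal, Ne, Ideal.span_eq_bot]
    constructor
    · intro h
      push Not at h
      obtain ⟨_, ⟨F, hF, rfl⟩, -⟩ := h
      exact ContainsMatching.mono (Finset.subset_univ F) hF
    · intro h h0
      have := h0 _ ⟨_, h, rfl⟩
      simp [sqMon, Finset.prod_eq_zero_iff] at this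
  have hbdd : BddAbove {k | ContainsMatching G k (Finset.univ : Finset V)} := by
    refine ⟨(Finset.univ : Finset V).card, fun k hk => ?_⟩
    have := ContainsMatching.two_mul_le_card hk
    omega
  have h0 : ContainsMatching G 0 (Finset.univ : Finset V) := trivial
  rw [monGrade, hset]
  exact ⟨fun h => (Nat.sSup_mem ⟨0, h0⟩ hbdd : ContainsMatching G _ _).of_le h,
    fun h => le_csSup hbdd h⟩

lemma sqfreePower_edgeIdeal_le_irrelevantIdeal {n : ℕ} (G : SimpleGraph (Fin n)) (k : ℕ) :
    sqfreePower K (edgeIdeal K G) (k + 1) ≤ irrelevantIdeal K n := by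
  refine (sqfreePower_edgeIdeal_antitone K (show 1 ≤ k + 1 by omega)).trans ?_
  rw [sqfreePower_edgeIdeal, Ideal.span_le]
  rintro _ ⟨F, ⟨i, -, -, hi, -⟩, rfl⟩
  exact Ideal.mem_of_dvd _ (Finset.dvd_prod_of_mem _ hi) (Ideal.subset_span ⟨i, rfl⟩)

end Matchings

section AdjoinEdge

variable {n : ℕ}

/-- The vertices of `[n]` in a set of vertices of `[n + 2]`. -/
def lowerVertices (F : Finset (Fin (n + 2))) : Finset (Fin n) :=
  Finset.univ.filter fun i => i.castSucc.castSucc ∈ F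

/-- The inclusion `[n] ⊆ [n + 2]`. -/
def castTwo : Fin n ↪ Fin (n + 2) := Fin.castSuccEmb.trans Fin.castSuccEmb

/-- The set of the two new vertices of `[n + 2]`. -/
def newVertices (n : ℕ) : Finset (Fin (n + 2)) := {(Fin.last n).castSucc, Fin.last (n + 1)}

lemma castTwo_apply (i : Fin n) : castTwo i = i.castSucc.castSucc := rfl

lemma mem_lowerVertices {F : Finset (Fin (n + 2))} {i : Fin n} :
    i ∈ lowerVertices F ↔ castTwo i ∈ F := by
  simp [lowerVertices, castTwo_apply]

lemma castTwo_notMem_newVertices (i : Fin n) : castTwo i ∉ newVertices n := by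
  have := i.2
  simp only [newVertices, castTwo_apply, Finset.mem_insert, Finset.mem_singleton, Fin.ext_iff,
    Fin.val_castSucc, Fin.val_last]
  omega

lemma disjoint_newVertices_map (F : Finset (Fin n)) :
    Disjoint (newVertices n) (F.map castTwo) := by
  rw [Finset.disjoint_right]
  intro v hv
  obtain ⟨i, -, rfl⟩ := Finset.mem_map.1 hv
  exact castTwo_notMem_newVertices i

lemma lowerVertices_map (F : Finset (Fin n)) : lowerVertices (F.map castTwo) = F := by
  ext i
  simp [mem_lowerVertices]

lemma lowerVertices_newVertices_union (F : Finset (Fin n)) :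
    lowerVertices (newVertices n ∪ F.map castTwo) = F := by
  ext i
  simp [mem_lowerVertices, castTwo_notMem_newVertices]

lemma lowerVertices_sdiff_newVertices (F : Finset (Fin (n + 2))) :
    lowerVertices (F \ newVertices n) = lowerVertices F := by
  ext i
  simp [mem_lowerVertices, castTwo_notMem_newVertices]

lemma lowerVertices_sdiff_pair (F : Finset (Fin (n + 2))) (i j : Fin n) :
    lowerVertices (F \ {castTwo i, castTwo j}) = lowerVertices F \ {i, j} := by
  ext v
  simp [mem_lowerVertices]

lemma map_lowerVertices_subset (F : Finset (Fin (n + 2))) :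
    (lowerVertices F).map castTwo ⊆ F := by
  intro v hv
  obtain ⟨i, hi, rfl⟩ := Finset.mem_map.1 hv
  exact mem_lowerVertices.1 hi

variable {H : SimpleGraph (Fin n)} {G : SimpleGraph (Fin (n + 2))}

lemma IsAdjoinEdge.adj_castTwo (hG : IsAdjoinEdge H G) {i j : Fin n} (h : H.Adj i j) :
    G.Adj (castTwo i) (castTwo j) :=
  (hG _ _).2 (Or.inl ⟨i, j, h, rfl, rfl⟩)

lemma IsAdjoinEdge.adj_new (hG : IsAdjoinEdge H G) :
    G.Adj (Fin.last n).castSucc (Fin.last (n + 1)) :=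
  (hG _ _).2 (Or.inr (Or.inl ⟨rfl, rfl⟩))

lemma IsAdjoinEdge.adj_cases (hG : IsAdjoinEdge H G) {a b : Fin (n + 2)} (h : G.Adj a b) :
    (∃ i j, H.Adj i j ∧ a = castTwo i ∧ b = castTwo j) ∨ {a, b} = newVertices n := by
  rcases (hG a b).1 h with ⟨i, j, hij, rfl, rfl⟩ | ⟨rfl, rfl⟩ | ⟨rfl, rfl⟩
  · exact Or.inl ⟨i, j, hij, rfl, rfl⟩
  · exact Or.inr rfl
  · exact Or.inr (Finset.pair_comm _ _)

lemma IsAdjoinEdge.containsMatching_of_lowerVertices (hG : IsAdjoinEdge H G) {k : ℕ} :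
    ∀ {F : Finset (Fin (n + 2))}, ContainsMatching H k (lowerVertices F) →
      ContainsMatching G k F := by
  induction k with
  | zero => exact fun _ => trivial
  | succ k ih =>
    rintro F ⟨i, j, hij, hi, hj, h⟩
    exact ⟨_, _, hG.adj_castTwo hij, mem_lowerVertices.1 hi, mem_lowerVertices.1 hj,
      ih (by rwa [lowerVertices_sdiff_pair])⟩

lemma IsAdjoinEdge.containsMatching_cases (hG : IsAdjoinEdge H G) {k : ℕ} :
    ∀ {F : Finset (Fin (n + 2))}, ContainsMatching G k F →
      ContainsMatching H k (lowerVertices F) ∨ newVertices n ⊆ F ∧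
        ∃ l, k = l + 1 ∧ ContainsMatching H l (lowerVertices F) := by
  induction k with
  | zero => exact fun _ => Or.inl trivial
  | succ k ih =>
    rintro F ⟨a, b, hab, ha, hb, h⟩
    rcases hG.adj_cases hab with ⟨i, j, hij, rfl, rfl⟩ | hnew
    · have hi := mem_lowerVertices.2 ha
      have hj := mem_lowerVertices.2 hb
      rcases ih h with h' | ⟨hF, l, rfl, h'⟩
      · rw [lowerVertices_sdiff_pair] at h'
        exact Or.inl ⟨i, j, hij, hi, hj, h'⟩
      · rw [lowerVertices_sdiff_pair] at h'
        exact Or.inr ⟨hF.trans Finset.sdiff_subset, _, rfl, i, j, hij, hi, hj, h'⟩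
    · rw [hnew] at h
      have hF : newVertices n ⊆ F := hnew ▸ by simp [Finset.insert_subset_iff, ha, hb]
      rcases ih h with h | ⟨hF', -⟩
      · rw [lowerVertices_sdiff_newVertices] at h
        exact Or.inr ⟨hF, k, rfl, h⟩
      · have h1 : Fin.last (n + 1) ∈ newVertices n := by simp [newVertices]
        exact absurd h1 (Finset.mem_sdiff.1 (hF' h1)).2

lemma IsAdjoinEdge.containsMatching_succ_iff (hG : IsAdjoinEdge H G) {k : ℕ}
    {F : Finset (Fin (n + 2))} : ContainsMatching G (k + 1) F ↔
      ContainsMatching H (k + 1) (lowerVertices F) ∨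
        newVertices n ⊆ F ∧ ContainsMatching H k (lowerVertices F) := by
  constructor
  · intro h
    rcases hG.containsMatching_cases h with h | ⟨hF, l, hl, h⟩
    · exact Or.inl h
    · obtain rfl : k = l := by omega
      exact Or.inr ⟨hF, h⟩
  · rintro (h | ⟨hF, h⟩)
    · exact hG.containsMatching_of_lowerVertices h
    · refine ⟨_, _, hG.adj_new, hF (by simp [newVertices]), hF (by simp [newVertices]),
        hG.containsMatching_of_lowerVertices ?_⟩
      rw [← newVertices, lowerVertices_sdiff_newVertices]
      exact h

variable (K : Type) [Field K]

lemma inclTwo_sqMon (F : Finset (Fin n)) : inclTwo K n (sqMon K F) = sqMon K (F.map castTwo) := by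
  simp [inclTwo, sqMon, inclLast_X, castTwo_apply]

lemma sqMon_newVertices :
    sqMon K (newVertices n) = X (Fin.last n).castSucc * X (Fin.last (n + 1)) :=
  sqMon_pair K (Fin.castSucc_lt_last _).ne

/-- `I(G)^[k+1] = I(H)^[k+1] + xₙ₊₁xₙ₊₂ I(H)^[k]`. -/
lemma IsAdjoinEdge.sqfreePower_succ (hG : IsAdjoinEdge H G) (k : ℕ) :
    sqfreePower K (edgeIdeal K G) (k + 1) =
      adjoinTwo (sqfreePower K (edgeIdeal K H) (k + 1)) (sqfreePower K (edgeIdeal K H) k) := by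
  rw [adjoinTwo, ← sqMon_newVertices]
  simp only [sqfreePower_edgeIdeal, Ideal.map_span, Ideal.span_mul_span', ← Ideal.span_union]
  apply le_antisymm
  · rw [Ideal.span_le]
    rintro _ ⟨F, hF, rfl⟩
    rcases hG.containsMatching_succ_iff.1 hF with h | ⟨hnew, h⟩
    · refine Ideal.mem_of_dvd _ (sqMon_dvd_sqMon K (map_lowerVertices_subset F))
        (Ideal.subset_span (Or.inl ⟨_, ⟨_, h, rfl⟩, inclTwo_sqMon K _⟩))
    · refine Ideal.mem_of_dvd _
        (sqMon_dvd_sqMon K (Finset.union_subset hnew (map_lowerVertices_subset F)))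
        (Ideal.subset_span (Or.inr ⟨_, rfl, _, ⟨_, ⟨_, h, rfl⟩, inclTwo_sqMon K _⟩, ?_⟩))
      exact sqMon_mul_sqMon K (disjoint_newVertices_map _)
  · rw [Ideal.span_le]
    rintro _ (⟨_, ⟨F, hF, rfl⟩, rfl⟩ | ⟨_, rfl, _, ⟨_, ⟨F, hF, rfl⟩, rfl⟩, rfl⟩)
    · refine Ideal.subset_span ⟨_, hG.containsMatching_succ_iff.2 (Or.inl ?_),
        (inclTwo_sqMon K F).symm⟩
      rwa [lowerVertices_map]
    · refine Ideal.subset_span ⟨newVertices n ∪ F.map castTwo,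
        hG.containsMatching_succ_iff.2 (Or.inr ⟨Finset.subset_union_left, ?_⟩), ?_⟩
      · rwa [lowerVertices_newVertices_union]
      · dsimp only
        rw [inclTwo_sqMon, sqMon_mul_sqMon K (disjoint_newVertices_map _)]

lemma IsAdjoinEdge.monGrade_edgeIdeal (hG : IsAdjoinEdge H G) :
    monGrade K (edgeIdeal K G) = monGrade K (edgeIdeal K H) + 1 := by
  have huniv : lowerVertices (Finset.univ : Finset (Fin (n + 2))) = Finset.univ := by
    ext
    simp [lowerVertices]
  have key : ∀ k, k + 1 ≤ monGrade K (edgeIdeal K G) ↔ k ≤ monGrade K (edgeIdeal K H) := by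
    intro k
    rw [le_monGrade_edgeIdeal_iff, le_monGrade_edgeIdeal_iff, hG.containsMatching_succ_iff, huniv]
    exact ⟨fun h => h.elim ContainsMatching.pred And.right,
      fun h => Or.inr ⟨Finset.subset_univ _, h⟩⟩
  have h1 := (key _).2 le_rfl
  have h2 := (key (monGrade K (edgeIdeal K G) - 1)).1 (by omega)
  omega

lemma nDepth_sqfreePower_edgeIdeal {m k : ℕ} {Γ : SimpleGraph (Fin m)}
    (hk : k ≤ monGrade K (edgeIdeal K Γ)) : nDepth K (edgeIdeal K Γ) k =
      (polyDepth K (sqfreePower K (edgeIdeal K Γ) k) : ℤ) - (2 * k - 1) := by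
  rw [nDepth, indeg_sqfreePower_edgeIdeal K ((le_monGrade_edgeIdeal_iff K).1 hk)]
  push_cast
  rfl

lemma IsAdjoinEdge.polyDepth_le (hG : IsAdjoinEdge H G) (k : ℕ) :
    polyDepth K (sqfreePower K (edgeIdeal K G) (k + 1 + 1)) ≤
      polyDepth K (sqfreePower K (edgeIdeal K H) (k + 1)) + 2 := by
  by_contra! hlt
  obtain ⟨d, hd⟩ := Nat.exists_eq_add_of_lt hlt
  have h := (le_polyDepth_iff (sqfreePower_edgeIdeal_le_irrelevantIdeal K G (k + 1)) _).1
    (le_refl (polyDepth K (sqfreePower K (edgeIdeal K G) (k + 1 + 1))))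
  have h1 := h.mono (show polyDepth K (sqfreePower K (edgeIdeal K H) (k + 1)) + 1 + 2 ≤ _ by omega)
  rw [hG.sqfreePower_succ K] at h1
  have h2 := h1.of_adjoinTwo (sqfreePower_edgeIdeal_antitone K (by omega))
  rw [← le_polyDepth_iff (sqfreePower_edgeIdeal_le_irrelevantIdeal K H k)] at h2
  omega

lemma IsAdjoinEdge.le_polyDepth (hG : IsAdjoinEdge H G) {k d : ℕ}
    (hd : d + 1 ≤ polyDepth K (sqfreePower K (edgeIdeal K H) (k + 1)))
    (hd' : GradeGE (irrelevantIdeal K n) d (sqfreePower K (edgeIdeal K H) k)) :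
    d + 2 ≤ polyDepth K (sqfreePower K (edgeIdeal K G) (k + 1)) := by
  rw [le_polyDepth_iff (sqfreePower_edgeIdeal_le_irrelevantIdeal K H k)] at hd
  rw [le_polyDepth_iff (sqfreePower_edgeIdeal_le_irrelevantIdeal K G k), hG.sqfreePower_succ K]
  exact hd.adjoinTwo (sqfreePower_edgeIdeal_antitone K (by omega)) hd'

end AdjoinEdge

/-- **Corollary 3.9.** Let `H` be a cochordal graph on `[n]` with no isolated vertices
and let `G` be the graph on `[n+2]` with edge set `E(H) ∪ {{n+1, n+2}}`. If
`g_{I(H)}` is non-increasing on `{1,…,ν(I(H))}`, then `g_{I(G)}` is non-increasing on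
`{1,…,ν(I(G))} = {1,…,ν(I(H))+1}`. -/
theorem normalized_depth_of_adjoin_edge_nonincreasing (K : Type) [Field K] (n : ℕ)
    (H : SimpleGraph (Fin n)) (hch : IsChordal Hᶜ) (hiso : NoIsolated H)
    (G : SimpleGraph (Fin (n + 2))) (hG : IsAdjoinEdge H G)
    (hg : ∀ k : ℕ, 1 ≤ k → k + 1 ≤ monGrade K (edgeIdeal K H) →
      nDepth K (edgeIdeal K H) (k + 1) ≤ nDepth K (edgeIdeal K H) k) :
    monGrade K (edgeIdeal K G) = monGrade K (edgeIdeal K H) + 1 ∧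
    ∀ k : ℕ, 1 ≤ k → k + 1 ≤ monGrade K (edgeIdeal K G) →
      nDepth K (edgeIdeal K G) (k + 1) ≤ nDepth K (edgeIdeal K G) k := by
  refine ⟨hG.monGrade_edgeIdeal K, fun k hk hkG => ?_⟩
  have hkH : k ≤ monGrade K (edgeIdeal K H) := by
    have := hG.monGrade_edgeIdeal K
    omega
  rw [nDepth_sqfreePower_edgeIdeal K hkG, nDepth_sqfreePower_edgeIdeal K (by omega)]
  obtain ⟨k, rfl⟩ := Nat.exists_eq_add_of_le' hk
  have hup := hG.polyDepth_le K k
  rcases Nat.eq_zero_or_pos (polyDepth K (sqfreePower K (edgeIdeal K H) (k + 1))) with h0 | h0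
  · push_cast
    omega
  obtain ⟨e, he⟩ := Nat.exists_eq_add_of_le' h0
  rcases k with _ | k
  · have hlow := hG.le_polyDepth K (k := 0) he.ge (by
      have htop : sqfreePower K (edgeIdeal K H) 0 = ⊤ := by
        rw [Ideal.eq_top_iff_one]
        exact Ideal.subset_span ⟨∅, by simp [sqMon], by simp⟩
      rw [htop]
      exact gradeGE_top _ _)
    simp only [zero_add, Nat.reduceAdd] at *
    push_cast
    omega
  · have hmono := hg (k + 1) (by omega) hkH
    rw [nDepth_sqfreePower_edgeIdeal K hkH, nDepth_sqfreePower_edgeIdeal K (by omega)] at hmono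
    have hlow := hG.le_polyDepth K (k := k + 1)
      (d := min e (polyDepth K (sqfreePower K (edgeIdeal K H) (k + 1)))) (by omega)
      ((le_polyDepth_iff (sqfreePower_edgeIdeal_le_irrelevantIdeal K H k) _).1 (by omega))
    push_cast at hmono ⊢
    omega
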